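/- arXiv:2403.05836 — 2 statements merged into one kernel-verified Lean document; each statement's English description precedes it below -/
import Mathlib

section
/- Let τ₂ be the topology on the bicyclic monoid C(p,q) generated by taking, as a neighbourhood base at each point q^i p^j, the family of sets O_n(q^i p^j) = {q^i p^j} ∪ (↓≼ q^{i+n} p^{j+n} \ {q^{i+n} p^{j+n}}) for n ∈ ℕ. Then for every q^i p^j ∈ C(p,q) and every n ∈ ℕ, the closure of O_n(q^i p^j) in (C(p,q), τ₂) equals ↕≼ q^i p^j, and the set ↕≼ q^i p^j is compact in (C(p,q), τ₂). -/
/-- The bicyclic monoid `C(p,q)` modeled on `ℕ × ℕ`, where `(k, l)` represents `q^k p^l`: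
`(k,l)·(m,n) = (k + (m ∸ l), n + (l ∸ m))`. -/
def bmul (a b : ℕ × ℕ) : ℕ × ℕ := (a.1 + (b.1 - a.2), b.2 + (a.2 - b.1))

/-- The natural partial order on the bicyclic monoid: `x ≼ y` iff `x = y·e`
for some idempotent `e`. -/
def bLe (x y : ℕ × ℕ) : Prop := ∃ e : ℕ × ℕ, bmul e e = e ∧ x = bmul y e

/-- `↓≼ x`, the down-set of `x` with respect to the natural partial order. -/
def bDown (x : ℕ × ℕ) : Set (ℕ × ℕ) := {y | bLe y x}

/-- `↑≼ x`, the up-set of `x` with respect to the natural partial order. -/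
def bUp (x : ℕ × ℕ) : Set (ℕ × ℕ) := {y | bLe x y}

/-- `↕≼ x = ↑≼ x ∪ ↓≼ x`. -/
def bUpDown (x : ℕ × ℕ) : Set (ℕ × ℕ) := bUp x ∪ bDown x

/-- `O_n(q^i p^j) = {q^i p^j} ∪ (↓≼ q^{i+n} p^{j+n} \ {q^{i+n} p^{j+n}})`. -/
def O2 (n : ℕ) (x : ℕ × ℕ) : Set (ℕ × ℕ) :=
  {x} ∪ (bDown (x.1 + n, x.2 + n) \ {(x.1 + n, x.2 + n)})

/-- The topology `τ₂` on the bicyclic monoid generated by the sets `O_n(q^i p^j)`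
as a neighbourhood base at each point `q^i p^j`. -/
def tau2 : TopologicalSpace (ℕ × ℕ) :=
  TopologicalSpace.generateFrom {S | ∃ x : ℕ × ℕ, ∃ n : ℕ, S = O2 n x}

/-!
The set `↕≼ x` is the diagonal `y.1 - y.2 = x.1 - x.2`, and `O_n(x)` is a cofinite subset of it
containing `x`. Hence basic neighbourhoods of two points meet exactly when the points share a
diagonal, which gives the closure, and every neighbourhood of `x` misses only finitely many points
of `↕≼ x`, which gives compactness.
-/

open Filter Topology

theorem isCompact_of_finite_diff_nhds {X : Type*} [TopologicalSpace X] {K : Set X} {x : X}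
    (hx : x ∈ K) (hK : ∀ U ∈ 𝓝 x, (K \ U).Finite) : IsCompact K := by
  have tendsto_val : Tendsto ((↑) : K → X) cofinite (𝓝 x) := fun U hU =>
    ((hK U hU).preimage Subtype.val_injective.injOn).subset fun y hy => ⟨y.2, hy⟩
  simpa only [Subtype.range_coe, Set.insert_eq_of_mem hx] using
    tendsto_val.isCompact_insert_range_of_cofinite

theorem bmul_self_eq_self_iff {e : ℕ × ℕ} : bmul e e = e ↔ e.1 = e.2 := by
  simp only [bmul, Prod.ext_iff]
  omega

-- The equation is `y.1 - y.2 = x.1 - x.2`, written without truncated subtraction.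
theorem bLe_iff {y x : ℕ × ℕ} : bLe y x ↔ x.1 ≤ y.1 ∧ y.1 + x.2 = x.1 + y.2 := by
  simp only [bLe, bmul_self_eq_self_iff]
  simp only [bmul, Prod.ext_iff]
  constructor
  · rintro ⟨e, he, hy⟩
    omega
  · intro h
    exact ⟨(y.2, y.2), rfl, by omega, by omega⟩

theorem mem_bUpDown_iff {y x : ℕ × ℕ} : y ∈ bUpDown x ↔ y.1 + x.2 = x.1 + y.2 := by
  simp only [bUpDown, bUp, bDown, Set.mem_union, Set.mem_ofPred_eq, bLe_iff]
  omega

theorem self_mem_bUpDown (x : ℕ × ℕ) : x ∈ bUpDown x :=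
  mem_bUpDown_iff.2 rfl

theorem mem_O2_iff {n : ℕ} {y x : ℕ × ℕ} :
    y ∈ O2 n x ↔ y ∈ bUpDown x ∧ (y.1 = x.1 ∨ x.1 + n < y.1) := by
  simp only [O2, bDown, Set.mem_union, Set.mem_singleton_iff, Set.mem_sdiff, Set.mem_ofPred_eq,
    bLe_iff, mem_bUpDown_iff, Prod.ext_iff]
  omega

theorem self_mem_O2 (n : ℕ) (x : ℕ × ℕ) : x ∈ O2 n x :=
  mem_O2_iff.2 ⟨self_mem_bUpDown x, Or.inl rfl⟩

theorem antitone_O2 (x : ℕ × ℕ) : Antitone fun n => O2 n x := by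
  intro m n hmn y hy
  rw [mem_O2_iff] at hy ⊢
  exact hy.imp_right (Or.imp_right (by omega))

theorem exists_O2_subset_of_mem_O2 {n : ℕ} {x y : ℕ × ℕ} (hy : y ∈ O2 n x) :
    ∃ m, O2 m y ⊆ O2 n x := by
  refine ⟨x.1 + n, fun z hz => ?_⟩
  simp only [mem_O2_iff, mem_bUpDown_iff] at hy hz ⊢
  omega

theorem O2_inter_O2_nonempty_iff {m n : ℕ} {x y : ℕ × ℕ} :
    (O2 m y ∩ O2 n x).Nonempty ↔ y ∈ bUpDown x := by
  constructor
  · rintro ⟨z, hzy, hzx⟩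
    simp only [mem_O2_iff, mem_bUpDown_iff] at hzx hzy ⊢
    omega
  · intro h
    refine ⟨(y.1 + (x.1 + n + m + 1), y.2 + (x.1 + n + m + 1)), ?_, ?_⟩ <;>
    · simp only [mem_O2_iff, mem_bUpDown_iff] at h ⊢
      omega

theorem finite_bUpDown_diff_O2 (n : ℕ) (x : ℕ × ℕ) : (bUpDown x \ O2 n x).Finite := by
  refine (Set.finite_Iic (x.1 + n, x.2 + n)).subset fun y ⟨hy, hyO⟩ => ?_
  simp only [mem_O2_iff, mem_bUpDown_iff] at hy hyO
  rw [Set.mem_Iic, Prod.le_def]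
  omega

theorem nhds_tau2_hasBasis (x : ℕ × ℕ) :
    (@nhds _ tau2 x).HasBasis (fun _ : ℕ => True) fun n => O2 n x := by
  have nhds_eq : @nhds _ tau2 x = ⨅ n, 𝓟 (O2 n x) := by
    rw [tau2, TopologicalSpace.nhds_generateFrom]
    apply le_antisymm
    · exact le_iInf fun n => iInf₂_le (O2 n x) ⟨self_mem_O2 n x, x, n, rfl⟩
    · refine le_iInf₂ ?_
      rintro _ ⟨hx, y, n, rfl⟩
      obtain ⟨m, hm⟩ := exists_O2_subset_of_mem_O2 hx
      exact iInf_le_of_le m (principal_mono.2 hm)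
  rw [nhds_eq]
  exact hasBasis_iInf_principal (antitone_O2 x).directed_ge

theorem closure_O2 (n : ℕ) (x : ℕ × ℕ) : @closure _ tau2 (O2 n x) = bUpDown x := by
  let := tau2
  ext y
  simp only [mem_closure_iff_nhds_basis' (nhds_tau2_hasBasis y), O2_inter_O2_nonempty_iff,
    forall_const]

theorem isCompact_bUpDown (x : ℕ × ℕ) : @IsCompact _ tau2 (bUpDown x) := by
  let := tau2
  refine isCompact_of_finite_diff_nhds (self_mem_bUpDown x) fun U hU => ?_
  obtain ⟨n, -, hnU⟩ := (nhds_tau2_hasBasis x).mem_iff.1 hU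
  exact (finite_bUpDown_diff_O2 n x).subset (Set.sdiff_subset_sdiff_right hnU)

/-- In `(C(p,q), τ₂)`: `cl(O_n(q^i p^j)) = ↕≼ q^i p^j`, and `↕≼ q^i p^j` is compact. -/
theorem stmt5 (i j n : ℕ) :
    @closure (ℕ × ℕ) tau2 (O2 n (i, j)) = bUpDown (i, j) ∧
    @IsCompact (ℕ × ℕ) tau2 (bUpDown (i, j)) :=
  ⟨closure_O2 n (i, j), isCompact_bUpDown (i, j)⟩
end

section
/- Let τ be a shift-continuous T₁ topology on the bicyclic monoid C(p,q) such that the maps C(p,q) → E(C(p,q)), x ↦ x·x^{-1} and x ↦ x^{-1}·x are continuous. If for some idempotent q^i p^i there exists an open neighbourhood U(q^i p^i) of q^i p^i in (C(p,q), τ) such that the set U(q^i p^i) ∩ E(C(p,q)) is finite, then τ is the discrete topology. -/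
/-- Inversion on the bicyclic monoid: `(q^k p^l)⁻¹ = q^l p^k`. -/
def binv (a : ℕ × ℕ) : ℕ × ℕ := (a.2, a.1)

/-- The set of idempotents `E(C(p,q)) = {q^i p^i : i ∈ ℕ}`. -/
def bE : Set (ℕ × ℕ) := {x | bmul x x = x}

lemma bmul_binv_mem (x : ℕ × ℕ) : bmul x (binv x) ∈ bE := by
  obtain ⟨k, l⟩ := x
  simp [bE, bmul, binv]

lemma binv_bmul_mem (x : ℕ × ℕ) : bmul (binv x) x ∈ bE := by
  obtain ⟨k, l⟩ := x
  simp [bE, bmul, binv]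

lemma idem_mem (i : ℕ) : ((i, i) : ℕ × ℕ) ∈ bE := by
  simp [bE, bmul]

/-- The subspace topology on a subset `Y` of the bicyclic monoid. -/
def subT (τ : TopologicalSpace (ℕ × ℕ)) (Y : Set (ℕ × ℕ)) : TopologicalSpace Y :=
  TopologicalSpace.induced Subtype.val τ

/-!
The map `x ↦ x x⁻¹` sends `q^a p^b` to `q^a p^a`. Choose `m ≥ i` with `q^m p^m ∉ U`. The points `x`
with `x x⁻¹ ∈ U` and `y y⁻¹ ∉ U ∩ E`, where `y = x q^m`, form an open neighbourhood of `q^i p^i`.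
It is finite: for `x = q^a p^b` in it, only finitely many `a` are possible, and `b ≥ m` would give
`y y⁻¹ = x x⁻¹ ∈ U`. As the topology is `T₁`, the point `q^i p^i` is isolated. Every `q^k p^l` is
carried to `q^i p^i` by a left and a right shift, and shifts have finite fibres, so every point is
isolated.
-/

open Set

lemma isOpen_singleton_of_finite_fiber {X Y : Type*} [TopologicalSpace X] [T1Space X]
    [TopologicalSpace Y] {f : X → Y} (hf : Continuous f) {x : X} (hx : IsOpen {f x})
    (hfin : (f ⁻¹' {f x}).Finite) : IsOpen {x} :=
  isOpen_singleton_of_finite_mem_nhds x ((hx.preimage hf).mem_nhds rfl) hfin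

lemma bmul_binv_self (x : ℕ × ℕ) : bmul x (binv x) = (x.1, x.1) := by
  simp [bmul, binv]

lemma finite_preimage_bmul_left (a c : ℕ × ℕ) : ((fun x => bmul a x) ⁻¹' {c}).Finite := by
  refine (finite_Iic (c.1 + a.2, c.2)).subset fun x hx => ?_
  simp only [bmul, mem_preimage, mem_singleton_iff, Prod.ext_iff] at hx
  simp only [mem_Iic, Prod.le_def]
  lia

lemma finite_preimage_bmul_right (a c : ℕ × ℕ) : ((fun x => bmul x a) ⁻¹' {c}).Finite := by
  refine (finite_Iic (c.1, c.2 + a.1)).subset fun x hx => ?_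
  simp only [bmul, mem_preimage, mem_singleton_iff, Prod.ext_iff] at hx
  simp only [mem_Iic, Prod.le_def]
  lia

lemma finite_setOf_idem_mem {U : Set (ℕ × ℕ)} (hfin : (U ∩ bE).Finite) :
    {k : ℕ | (k, k) ∈ U}.Finite :=
  (hfin.image Prod.fst).subset fun k hk => ⟨(k, k), ⟨hk, idem_mem k⟩, rfl⟩

section Topology

-- This instance takes precedence over the product topology on `ℕ × ℕ`.
variable [TopologicalSpace (ℕ × ℕ)] [T1Space (ℕ × ℕ)]

lemma isOpen_singleton_idem (hright : ∀ a : ℕ × ℕ, Continuous fun x => bmul x a)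
    (hmi : Continuous fun x : ℕ × ℕ => bmul x (binv x)) {i : ℕ} {U : Set (ℕ × ℕ)} (hU : IsOpen U)
    (hiU : (i, i) ∈ U) (hfin : (U ∩ bE).Finite) : IsOpen {((i, i) : ℕ × ℕ)} := by
  simp only [bmul_binv_self] at hmi
  have hidem := finite_setOf_idem_mem hfin
  obtain ⟨m, hle : i ≤ m, hmU : (m, m) ∉ U⟩ := (Ici_infinite i).exists_notMem_finite hidem
  let V : Set (ℕ × ℕ) :=
    {x | (x.1, x.1) ∈ U} ∩ {x | ((bmul x (m, 0)).1, (bmul x (m, 0)).1) ∈ (U ∩ bE)ᶜ}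
  have hV : IsOpen V :=
    (hU.preimage hmi).inter (hfin.isClosed.isOpen_compl.preimage (hmi.comp (hright (m, 0))))
  have hiV : (i, i) ∈ V := by
    have hfst : (bmul (i, i) (m, 0)).1 = m := Nat.add_sub_cancel' hle
    simp only [V, mem_inter_iff, mem_ofPred_eq, mem_compl_iff, hfst]
    exact ⟨hiU, fun h => hmU h.1⟩
  have hVfin : V.Finite := by
    refine (hidem.prod (finite_Iio m)).subset ?_
    rintro ⟨a, b⟩ ⟨haU : (a, a) ∈ U, hab⟩
    refine ⟨haU, lt_of_not_ge fun hmb : m ≤ b => ?_⟩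
    have hfst : (bmul (a, b) (m, 0)).1 = a := by simp [bmul, hmb]
    simp only [mem_ofPred_eq, mem_compl_iff, hfst] at hab
    exact hab ⟨haU, idem_mem a⟩
  exact isOpen_singleton_of_finite_mem_nhds _ (hV.mem_nhds hiV) hVfin

lemma isOpen_singleton_of_isOpen_singleton_idem
    (hleft : ∀ a : ℕ × ℕ, Continuous fun x => bmul a x)
    (hright : ∀ a : ℕ × ℕ, Continuous fun x => bmul x a) {i : ℕ}
    (hi : IsOpen {((i, i) : ℕ × ℕ)}) (x : ℕ × ℕ) : IsOpen {x} := by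
  obtain ⟨m, n⟩ := x
  have hright_eq : bmul (i, n) (n, i) = (i, i) := by simp [bmul]
  have hleft_eq : bmul (i, m) (m, n) = (i, n) := by simp [bmul]
  have hin : IsOpen {((i, n) : ℕ × ℕ)} :=
    isOpen_singleton_of_finite_fiber (hright (n, i)) (by rwa [hright_eq])
      (finite_preimage_bmul_right _ _)
  exact isOpen_singleton_of_finite_fiber (hleft (i, m)) (by rwa [hleft_eq])
    (finite_preimage_bmul_left _ _)

end Topology

theorem stmt10_general (τ : TopologicalSpace (ℕ × ℕ))
    (hT1 : @T1Space (ℕ × ℕ) τ)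
    (hleft : ∀ a : ℕ × ℕ, @Continuous (ℕ × ℕ) (ℕ × ℕ) τ τ (fun x => bmul a x))
    (hright : ∀ a : ℕ × ℕ, @Continuous (ℕ × ℕ) (ℕ × ℕ) τ τ (fun x => bmul x a))
    (hmi : @Continuous (ℕ × ℕ) bE τ (subT τ bE)
      (fun x => ⟨bmul x (binv x), bmul_binv_mem x⟩))
    (i : ℕ) (U : Set (ℕ × ℕ)) (hU : @IsOpen (ℕ × ℕ) τ U) (hiU : ((i, i) : ℕ × ℕ) ∈ U)
    (hfin : (U ∩ bE).Finite) :
    τ = ⊥ := by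
  have hmi_val : @Continuous (ℕ × ℕ) (ℕ × ℕ) τ τ (fun x => bmul x (binv x)) :=
    continuous_induced_rng.mp hmi
  have hi : @IsOpen (ℕ × ℕ) τ {(i, i)} := isOpen_singleton_idem hright hmi_val hU hiU hfin
  exact eq_bot_of_singletons_open (isOpen_singleton_of_isOpen_singleton_idem hleft hright hi)

/-- Lemma 3: let `τ` be a shift-continuous `T₁` topology on `C(p,q)` such that the maps
`x ↦ x·x⁻¹` and `x ↦ x⁻¹·x` into `E(C(p,q))` are continuous. If some idempotent `q^i p^i`
has an open neighbourhood `U` with `U ∩ E(C(p,q))` finite, then `τ` is discrete. -/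
theorem stmt10 (τ : TopologicalSpace (ℕ × ℕ))
    (hT1 : @T1Space (ℕ × ℕ) τ)
    (hleft : ∀ a : ℕ × ℕ, @Continuous (ℕ × ℕ) (ℕ × ℕ) τ τ (fun x => bmul a x))
    (hright : ∀ a : ℕ × ℕ, @Continuous (ℕ × ℕ) (ℕ × ℕ) τ τ (fun x => bmul x a))
    (hmi : @Continuous (ℕ × ℕ) bE τ (subT τ bE)
      (fun x => ⟨bmul x (binv x), bmul_binv_mem x⟩))
    (him : @Continuous (ℕ × ℕ) bE τ (subT τ bE)
      (fun x => ⟨bmul (binv x) x, binv_bmul_mem x⟩))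
    (i : ℕ) (U : Set (ℕ × ℕ)) (hU : @IsOpen (ℕ × ℕ) τ U) (hiU : ((i, i) : ℕ × ℕ) ∈ U)
    (hfin : (U ∩ bE).Finite) :
    τ = ⊥ :=
  stmt10_general τ hT1 hleft hright hmi i U hU hiU hfin
end
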